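/- Burton–Keane uniqueness of the infinite cluster: for every dimension d ≥ 1 and every p ∈ (0,1) with θ(p) > 0, ℙ_p-almost surely there exists exactly one infinite open cluster, i.e. ℙ_p[the subgraph of open edges has exactly one infinite connected component] = 1. -/

import Mathlib

open MeasureTheory

namespace Perc

/-- Vertices of `ℤ^d`. -/
abbrev Vertex (d : ℕ) := Fin d → ℤ

/-- Nearest-neighbour adjacency in `ℤ^d`: `‖x − y‖₁ = 1`. -/
def adj {d : ℕ} (x y : Vertex d) : Prop :=
  (∑ i, (x i - y i).natAbs) = 1

/-- The unordered pair `e` is a nearest-neighbour edge of `ℤ^d`. -/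
def IsEdge {d : ℕ} (e : Sym2 (Vertex d)) : Prop :=
  ∃ x y : Vertex d, adj x y ∧ e = s(x, y)

/-- The set `E` of nearest-neighbour edges of `ℤ^d`. -/
abbrev Edge (d : ℕ) := {e : Sym2 (Vertex d) // IsEdge e}

/-- Percolation configurations `ω ∈ {0,1}^E`. -/
abbrev Config (d : ℕ) := Edge d → Bool

/-- One step along an open edge of `ω`. -/
def step {d : ℕ} (ω : Config d) (x y : Vertex d) : Prop :=
  ∃ h : adj x y, ω ⟨s(x, y), x, y, h, rfl⟩ = true

/-- `x` and `y` are joined by a path of open edges. -/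
def Conn {d : ℕ} (ω : Config d) : Vertex d → Vertex d → Prop :=
  Relation.ReflTransGen (step ω)

/-- The open cluster of `x` in `ω`. -/
def cluster {d : ℕ} (ω : Config d) (x : Vertex d) : Set (Vertex d) :=
  {y | Conn ω x y}

/-- The box `Λ_n = {−n, …, n}^d`. -/
def box (d n : ℕ) : Set (Vertex d) := {x | ∀ i, |x i| ≤ (n : ℤ)}

/-- `∂Λ_n`: vertices of `Λ_n` having a nearest neighbour outside `Λ_n`. -/
def boxBoundary (d n : ℕ) : Set (Vertex d) :=
  {x | x ∈ box d n ∧ ∃ y, adj x y ∧ y ∉ box d n}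

/-- The origin of `ℤ^d`. -/
def origin (d : ℕ) : Vertex d := fun _ => 0

/-- The event `{0 ↔ ∂Λ_n}`. -/
def ZeroToBoundary (d n : ℕ) : Set (Config d) :=
  {ω | ∃ y ∈ boxBoundary d n, Conn ω (origin d) y}

/-- The event `{0 ↔ ∞}` that the open cluster of the origin is infinite. -/
def ZeroToInfinity (d : ℕ) : Set (Config d) :=
  {ω | (cluster ω (origin d)).Infinite}

/-- `μ` is the law of i.i.d. Bernoulli(p) edge variables: it is a probability measure on
`{0,1}^E` under which every finite cylinder has the corresponding product probability. -/
def IsBernoulli (d : ℕ) (p : ℝ) (μ : Measure (Config d)) : Prop :=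
  IsProbabilityMeasure μ ∧
    ∀ (s : Finset (Edge d)) (f : Edge d → Bool),
      μ {ω : Config d | ∀ e ∈ s, ω e = f e} =
        ENNReal.ofReal (∏ e ∈ s, if f e then p else 1 - p)

/-! ### Finite part -/
section FinitePart
open scoped Classical

/-- Bernoulli weight of one bit. -/
noncomputable def bw (r : ℝ) (b : Bool) : ℝ := if b then r else 1 - r

lemma bw_sum (r : ℝ) : ∑ b : Bool, bw r b = 1 := by simp [bw]

lemma bw_pos {r : ℝ} (h0 : 0 < r) (h1 : r < 1) (b : Bool) : 0 < bw r b := by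
  cases b <;> simp [bw] <;> linarith

/-- weight of a configuration -/
noncomputable def wt {E : Type*} [Fintype E] (r : ℝ) (η : E → Bool) : ℝ := ∏ e, bw r (η e)

lemma sum_prod_one {E : Type*} [Fintype E] (g : E → Bool → ℝ) (h : ∀ e, ∑ b, g e b = 1) : 
    ∑ η : E → Bool, ∏ e, g e (η e) = 1 := by
  rw [← Fintype.prod_sum]
  simp only [h, Finset.prod_const_one]

lemma wt_sum {E : Type*} [Fintype E] (r : ℝ) : ∑ η : E → Bool, wt r η = 1 :=
  sum_prod_one (fun _ => bw r) (fun _ => bw_sum r)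

lemma wt_nonneg {E : Type*} [Fintype E] {r : ℝ} (h0 : 0 < r) (h1 : r < 1) (η : E → Bool) :
    0 ≤ wt r η := Finset.prod_nonneg fun _ _ => (bw_pos h0 h1 _).le

/-- stopping sets -/
def Stop {E : Type*} (T : (E → Bool) → Finset E) : Prop :=
  ∀ η η' : E → Bool, (∀ e ∈ T η, η' e = η e) → T η' = T η

/-- swapping two configurations off the stopping set -/
noncomputable def swp {E : Type*} (T : (E → Bool) → Finset E)
    (x : (E → Bool) × (E → Bool)) : (E → Bool) × (E → Bool) :=
  (fun e => if e ∈ T x.1 then x.1 e else x.2 e, fun e => if e ∈ T x.1 then x.2 e else x.1 e)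

lemma swp_T {E : Type*} {T : (E → Bool) → Finset E} (hT : Stop T) (x) :
    T (swp T x).1 = T x.1 := by
  apply hT
  intro e he
  simp [swp, he]

lemma swp_swp {E : Type*} {T : (E → Bool) → Finset E} (hT : Stop T) :
    Function.Involutive (swp T) := by
  intro x
  have h := swp_T hT x
  have key : ∀ y : (E → Bool) × (E → Bool), T y.1 = T x.1 → swp T y =
      (fun e => if e ∈ T x.1 then y.1 e else y.2 e, fun e => if e ∈ T x.1 then y.2 e else y.1 e) := by
    intro y hy
    simp only [swp, hy]
  rw [key _ h, key x rfl]
  ext e <;> by_cases he : e ∈ T x.1 <;> simp [he]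

lemma stop_change {E : Type*} [Fintype E] {T : (E → Bool) → Finset E} (hT : Stop T) (p q : ℝ) :
    ∑ η : E → Bool, ∏ e, (if e ∈ T η then bw q (η e) else bw p (η e)) = 1 := by
  have h1 : ∑ x : (E → Bool) × (E → Bool), wt q x.1 * wt p x.2 = 1 := by
    rw [Fintype.sum_prod_type]
    simp_rw [← Finset.mul_sum, wt_sum, mul_one, wt_sum]
  rw [← h1, ← Equiv.sum_comp (swp_swp hT).toPerm, Fintype.sum_prod_type]
  refine Finset.sum_congr rfl fun η _ => ?_
  have h2 : ∀ η' : E → Bool, wt q (swp T (η, η')).1 * wt p (swp T (η, η')).2 =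
      (∏ e, (if e ∈ T η then bw q (η e) else bw p (η e))) *
      ∏ e, (fun e b => if e ∈ T η then bw p b else bw q b) e (η' e) := by
    intro η'
    simp only [wt, ← Finset.prod_mul_distrib]
    refine Finset.prod_congr rfl fun e _ => ?_
    by_cases he : e ∈ T η <;> simp [swp, he, mul_comm]
  simp only [Function.Involutive.coe_toPerm]
  rw [Finset.sum_congr rfl fun η' _ => h2 η', ← Finset.mul_sum,
    sum_prod_one (fun e b => if e ∈ T η then bw p b else bw q b), mul_one]
  intro e
  by_cases he : e ∈ T η <;> simp [he, bw]

/-- centred bit -/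
noncomputable def xi (p : ℝ) (b : Bool) : ℝ := (if b then 1 else 0) - p

lemma stop_mean {E : Type*} [Fintype E] {T : (E → Bool) → Finset E} (hT : Stop T) (p : ℝ) :
    ∑ η : E → Bool, wt p η * ∑ e ∈ T η, xi p (η e) = 0 := by
  have h0 : ∀ e : E, ∑ η : E → Bool, wt p η * (if e ∈ T η then xi p (η e) else 0) = 0 := by
    intro e
    have inv : Function.Involutive (fun η : E → Bool => Function.update η e (!η e)) := by
      intro η; simp
    have hmem : ∀ η, e ∈ T (Function.update η e (!η e)) ↔ e ∈ T η := by
      have : ∀ η, e ∉ T η → e ∉ T (Function.update η e (!η e)) := by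
        intro η h
        rw [hT η]
        · exact h
        · intro f hf
          rw [Function.update_of_ne]
          rintro rfl; exact h hf
      intro η
      refine ⟨fun h => ?_, fun h => ?_⟩
      · by_contra h'; exact this η h' h
      · by_contra h'
        have := this _ h'
        simp at this; exact this h
    have hpt : ∀ η : E → Bool, wt p η * (if e ∈ T η then xi p (η e) else 0) +
      wt p (Function.update η e (!η e)) * (if e ∈ T (Function.update η e (!η e)) then
        xi p (Function.update η e (!η e) e) else 0) = 0 := by
      intro η
      simp only [hmem]
      by_cases he : e ∈ T η
      · simp only [he, if_true, Function.update_self]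
        have hw : ∀ η : E → Bool, wt p η = bw p (η e) * ∏ f ∈ Finset.univ.erase e, bw p (η f) :=
          fun η => (Finset.mul_prod_erase _ _ (Finset.mem_univ e)).symm
        rw [hw η, hw (Function.update _ _ _)]
        have : ∏ f ∈ Finset.univ.erase e, bw p (Function.update η e (!η e) f) =
            ∏ f ∈ Finset.univ.erase e, bw p (η f) := by
          refine Finset.prod_congr rfl fun f hf => ?_
          rw [Function.update_of_ne (Finset.ne_of_mem_erase hf)]
        rw [this, Function.update_self]
        cases η e <;> simp [bw, xi] <;> ring
      · simp [he]
    have := Finset.sum_congr rfl (fun η (_ : η ∈ Finset.univ) => hpt η)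
    have h5 : ∑ η : E → Bool, wt p (Function.update η e (!η e)) *
        (if e ∈ T (Function.update η e (!η e)) then
        xi p (Function.update η e (!η e) e) else 0) =
        ∑ η : E → Bool, wt p η * (if e ∈ T η then xi p (η e) else 0) :=
      Equiv.sum_comp inv.toPerm (fun η => wt p η * (if e ∈ T η then xi p (η e) else 0))
    rw [Finset.sum_add_distrib, h5] at this
    simp only [Finset.sum_const_zero] at this
    linarith
  calc _ = ∑ η : E → Bool, ∑ e, wt p η * (if e ∈ T η then xi p (η e) else 0) := by
        refine Finset.sum_congr rfl fun η _ => ?_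
        rw [← Finset.mul_sum, ← Finset.sum_filter]
        simp
    _ = 0 := by
      rw [Finset.sum_comm]; exact Finset.sum_eq_zero fun e _ => h0 e

/-- Large deviations on stopping sets. -/
lemma stop_ld {p ε : ℝ} (hp : p ∈ Set.Ioo (0 : ℝ) 1) (hε : 0 < ε) (hεp : ε < p) :
    ∃ ρ : ℝ, 1 < ρ ∧ ∀ (E : Type) [Fintype E] (T : (E → Bool) → Finset E), Stop T → 
      ∀ m : ℕ, ∑ η : E → Bool, wt p η *
        (if m ≤ (T η).card ∧ ∑ e ∈ T η, xi p (η e) ≤ - ε * (T η).card then 1 else 0)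
        ≤ (ρ ^ m)⁻¹ := by
  obtain ⟨hp0, hp1⟩ := hp
  set q := p - ε with hq
  have hq0 : 0 < q := by linarith
  have hq1 : q < 1 := by linarith
  set la := Real.log (q / p)
  set lb := Real.log ((1 - q) / (1 - p))
  have hla : la < 0 := Real.log_neg (by positivity) ((div_lt_one hp0).2 (by linarith))
  have hlb : 0 < lb := Real.log_pos ((one_lt_div (by linarith)).2 (by linarith))
  have hpos : 0 < q * la + (1 - q) * lb := by
    have h1 : 1 - p / q < la := by
      have := Real.log_lt_sub_one_of_pos (x := p / q) (by positivity) (by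
        rw [Ne, div_eq_one_iff_eq hq0.ne']; linarith)
      have h : la = - Real.log (p / q) := by rw [← Real.log_inv, inv_div]
      linarith
    have h2 : 1 - (1 - p) / (1 - q) < lb := by
      have := Real.log_lt_sub_one_of_pos (x := (1 - p) / (1 - q)) (div_pos (by linarith) (by linarith)) (by
        rw [Ne, div_eq_one_iff_eq (by linarith)]; linarith)
      have h : lb = - Real.log ((1 - p) / (1 - q)) := by rw [← Real.log_inv, inv_div]
      linarith
    have h3 : q * (1 - p / q) = q - p := by field_simp
    have h4 : (1 - q) * (1 - (1 - p) / (1 - q)) = p - q := by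
      have : 1 - q ≠ 0 := by linarith
      field_simp; ring
    nlinarith
  set τ := q * la + (1 - q) * lb with hτ
  refine ⟨Real.exp τ, Real.one_lt_exp_iff.2 hpos, ?_⟩
  intro E _ T hT m
  rw [← Real.exp_nat_mul, ← Real.exp_neg]
  rw [← mul_one (Real.exp _)]
  conv_rhs => rw [← stop_change hT p q, Finset.mul_sum]
  refine Finset.sum_le_sum fun η _ => ?_
  have hprod : ∏ e, (if e ∈ T η then bw q (η e) else bw p (η e)) =
      wt p η * ∏ e ∈ T η, (bw q (η e) / bw p (η e)) := by
    have : ∏ e ∈ T η, (bw q (η e) / bw p (η e)) = ∏ e, if e ∈ T η then bw q (η e) / bw p (η e) else 1 := by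
      rw [Finset.prod_ite_mem]; simp
    rw [this, wt, ← Finset.prod_mul_distrib]
    refine Finset.prod_congr rfl fun e _ => ?_
    have := (bw_pos hp0 hp1 (η e)).ne'
    split_ifs
    · field_simp
    · simp
  have hnn : 0 ≤ ∏ e ∈ T η, (bw q (η e) / bw p (η e)) :=
    Finset.prod_nonneg fun e _ => (div_pos (bw_pos hq0 hq1 _) (bw_pos hp0 hp1 _)).le
  rw [hprod, mul_left_comm]
  refine mul_le_mul_of_nonneg_left ?_ (wt_nonneg hp0 hp1 η)
  split_ifs with h
  · obtain ⟨hm, hM⟩ := h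
    have : ∏ e ∈ T η, (bw q (η e) / bw p (η e)) = 
        Real.exp ((T η).card * (lb - p * (lb - la)) - (∑ e ∈ T η, xi p (η e)) * (lb - la)) := by
      have h1 : ∀ e ∈ T η, bw q (η e) / bw p (η e) = Real.exp ((lb - p * (lb - la)) - xi p (η e) * (lb - la)) := by
        intro e _
        cases η e
        · simp only [bw, xi, Bool.false_eq_true, if_false]
          rw [← Real.exp_log (div_pos (by linarith : 0 < 1 - q) (by linarith : 0 < 1 - p))]
          congr 1; simp only [lb]; ring
        · simp only [bw, xi, if_true]
          rw [← Real.exp_log (div_pos hq0 hp0)]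
          congr 1; simp only [la]; ring
      rw [Finset.prod_congr rfl h1, ← Real.exp_sum, Finset.sum_sub_distrib, Finset.sum_mul, Finset.sum_const, nsmul_eq_mul]
    rw [this, ← Real.exp_add]
    apply Real.one_le_exp
    have hm' : (m : ℝ) ≤ (T η).card := by exact_mod_cast hm
    have h1 : (∑ e ∈ T η, xi p (η e)) * (lb - la) ≤ - ε * (T η).card * (lb - la) :=
      mul_le_mul_of_nonneg_right hM (by linarith)
    have h2 : (m:ℝ) * τ ≤ (T η).card * τ := mul_le_mul_of_nonneg_right hm' hpos.le
    have h3 : ((T η).card : ℝ) * τ = (T η).card * (lb - p * (lb - la)) + ε * (T η).card * (lb - la) := by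
      rw [hτ, hq]; ring
    linarith
  · positivity

/-- open step in a finite edge family -/
def FR {V E : Type} (s t : E → V) (η : E → Bool) (u v : V) : Prop :=
  ∃ e, η e = true ∧ ((s e = u ∧ t e = v) ∨ (s e = v ∧ t e = u))

def FK {V E : Type} (s t : E → V) (η : E → Bool) : V → V → Prop :=
  Relation.ReflTransGen (FR s t η)

lemma FK.symm {V E : Type} {s t : E → V} {η : E → Bool} {u v : V} (h : FK s t η u v) :
    FK s t η v u := by
  have : Std.Symm (FR s t η) := ⟨by
    rintro a b ⟨e, h1, h2⟩
    exact ⟨e, h1, h2.symm⟩⟩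
  exact Std.Symm.symm (r := Relation.ReflTransGen (FR s t η)) _ _ h

noncomputable def FT {V E : Type} [Fintype E] (s t : E → V) (S : Set V) (η : E → Bool) : Finset E :=
  Finset.univ.filter fun e => ∃ x ∈ S, FK s t η x (s e) ∨ FK s t η x (t e)

lemma FT_stop {V E : Type} [Fintype E] (s t : E → V) (S : Set V) : Stop (FT s t S) := by
  intro η η' h
  have key : ∀ x ∈ S, ∀ y, FK s t η' x y ↔ FK s t η x y := by
    intro x hx y
    constructor
    · intro hy
      induction hy with
      | refl => exact Relation.ReflTransGen.refl
      | tail _ hr ih =>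
        obtain ⟨e, h1, h2⟩ := hr
        refine ih.tail ⟨e, ?_, h2⟩
        rw [← h e, h1]
        simp only [FT, Finset.mem_filter, Finset.mem_univ, true_and]
        refine ⟨x, hx, ?_⟩
        rcases h2 with h2 | h2
        · left; rw [h2.1]; exact ih
        · right; rw [h2.2]; exact ih
    · intro hy
      induction hy with
      | refl => exact Relation.ReflTransGen.refl
      | tail hc hr ih =>
        obtain ⟨e, h1, h2⟩ := hr
        refine ih.tail ⟨e, ?_, h2⟩
        rw [h e, h1]
        simp only [FT, Finset.mem_filter, Finset.mem_univ, true_and]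
        refine ⟨x, hx, ?_⟩
        rcases h2 with h2 | h2
        · left; rw [h2.1]; exact hc
        · right; rw [h2.2]; exact hc
  ext e
  simp only [FT, Finset.mem_filter, Finset.mem_univ, true_and]
  refine exists_congr fun x => and_congr_right fun hx => ?_
  rw [key x hx, key x hx]

def FKsetoid {V E : Type} (s t : E → V) (η : E → Bool) : Setoid V :=
  ⟨FK s t η, ⟨fun _ => Relation.ReflTransGen.refl, FK.symm, Relation.ReflTransGen.trans⟩⟩

/-- representative of the cluster -/
noncomputable def rep {V E : Type} (s t : E → V) (η : E → Bool) (x : V) : V :=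
  (Quotient.mk (FKsetoid s t η) x).out

lemma rep_eq {V E : Type} {s t : E → V} {η : E → Bool} {x y : V} :
    rep s t η x = rep s t η y ↔ FK s t η x y := by
  unfold rep
  rw [Quotient.out_inj]
  exact Quotient.eq (r := FKsetoid s t η)

lemma rep_rep {V E : Type} {s t : E → V} {η : E → Bool} {x : V} :
    rep s t η (rep s t η x) = rep s t η x := by
  unfold rep
  rw [Quotient.out_eq]

/-- the edges joining two distinct clusters, both meeting `B` -/
def FX {V E : Type} (s t : E → V) (B : Finset V) (η : E → Bool) (e : E) : Prop :=
  (∃ b ∈ B, FK s t η b (s e)) ∧ (∃ b ∈ B, FK s t η b (t e)) ∧ ¬ FK s t η (s e) (t e)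

def Fbad {V E : Type} [Fintype E] (s t : E → V) (p ε : ℝ) (m : ℕ) (x : V) (η : E → Bool) : Prop :=
  m ≤ (FT s t {x} η).card ∧ ∑ e ∈ FT s t {x} η, xi p (η e) ≤ - ε * (FT s t {x} η).card

lemma FT_rep {V E : Type} [Fintype E] {s t : E → V} {η : E → Bool} {x y : V} (h : FK s t η x y) :
    FT s t {x} η = FT s t {y} η := by
  ext e
  simp only [FT, Finset.mem_filter, Finset.mem_univ, true_and, Set.mem_singleton_iff, exists_eq_left]
  exact or_congr ⟨fun h' => h.symm.trans h', fun h' => h.trans h'⟩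
    ⟨fun h' => h.symm.trans h', fun h' => h.trans h'⟩

lemma pointwise {V E : Type} [Fintype E] (s t : E → V) (B : Finset V) {p ε : ℝ}
    (hp : p ∈ Set.Ioo (0 : ℝ) 1) (hε : 0 < ε) (m : ℕ) (η : E → Bool) :
    p * ∑ e, (if FX s t B η e then 1 else 0) ≤ 
      ∑ e ∈ FT s t B η, xi p (η e) + 2 * ε * Fintype.card E + m * B.card +
      ∑ e, ((if Fbad s t p ε m (s e) η then 1 else 0) + (if Fbad s t p ε m (t e) η then 1 else 0)) := by
  obtain ⟨hp0, hp1⟩ := hp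
  set R := B.image (rep s t η) with hR
  -- membership
  have hmem : ∀ c ∈ R, ∀ e, e ∈ FT s t {c} η ↔ (c = rep s t η (s e) ∨ c = rep s t η (t e)) := by
    intro c hc e
    have hcc : rep s t η c = c := by
      obtain ⟨b, _, rfl⟩ := Finset.mem_image.1 hc
      exact rep_rep
    simp only [FT, Finset.mem_filter, Finset.mem_univ, true_and, Set.mem_singleton_iff, exists_eq_left]
    rw [← rep_eq, ← rep_eq, hcc]
  have hRmem : ∀ x, rep s t η x ∈ R ↔ ∃ b ∈ B, FK s t η b x := by
    intro x
    simp only [hR, Finset.mem_image, rep_eq]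
  -- the double count
  have hcount : ∀ (e : E) (g : V → ℝ), ∑ c ∈ R, (if e ∈ FT s t {c} η then g c else 0) =
      (if rep s t η (s e) ∈ R then g (rep s t η (s e)) else 0) + 
      (if rep s t η (t e) ∈ R ∧ rep s t η (s e) ≠ rep s t η (t e) then g (rep s t η (t e)) else 0) := by
    intro e g
    have h1 : ∀ c ∈ R, (if e ∈ FT s t {c} η then g c else 0) = 
        (if rep s t η (s e) = c then g c else 0) + 
        (if rep s t η (t e) = c then (if rep s t η (s e) ≠ rep s t η (t e) then g c else 0) else 0) := by
      intro c hc
      simp only [hmem c hc e]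
      by_cases h1 : c = rep s t η (s e) <;> by_cases h2 : c = rep s t η (t e)
      · simp [h1.symm, h2.symm]
      · simp [h1.symm, h2, Ne.symm h2]
      · simp [h1, h2.symm, Ne.symm h1]
      · simp [h1, h2, Ne.symm h1, Ne.symm h2]
    rw [Finset.sum_congr rfl h1, Finset.sum_add_distrib, Finset.sum_ite_eq, Finset.sum_ite_eq, ite_and]
  have hid : ∑ c ∈ R, ∑ e ∈ FT s t {c} η, xi p (η e) = 
      ∑ e ∈ FT s t B η, xi p (η e) - p * ∑ e, (if FX s t B η e then 1 else 0) := by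
    have h1 : ∀ c ∈ R, ∑ e ∈ FT s t {c} η, xi p (η e) = 
        ∑ e, (if e ∈ FT s t {c} η then xi p (η e) else 0) := by
      intro c _
      rw [← Finset.sum_filter]; simp
    have h2 : ∑ e ∈ FT s t B η, xi p (η e) = 
        ∑ e, (if e ∈ FT s t B η then xi p (η e) else 0) := by
      rw [← Finset.sum_filter]; simp
    rw [Finset.sum_congr rfl h1, Finset.sum_comm, h2, Finset.mul_sum, ← Finset.sum_sub_distrib]
    refine Finset.sum_congr rfl fun e _ => ?_
    rw [hcount e (fun _ => xi p (η e))]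
    have hB : e ∈ FT s t B η ↔ (rep s t η (s e) ∈ R ∨ rep s t η (t e) ∈ R) := by
      simp only [FT, Finset.mem_filter, Finset.mem_univ, true_and, hRmem, Finset.mem_coe]
      constructor
      · rintro ⟨x, hx, h | h⟩
        · exact Or.inl ⟨x, hx, h⟩
        · exact Or.inr ⟨x, hx, h⟩
      · rintro (⟨x, hx, h⟩ | ⟨x, hx, h⟩)
        · exact ⟨x, hx, Or.inl h⟩
        · exact ⟨x, hx, Or.inr h⟩
    have hX : FX s t B η e ↔ (rep s t η (s e) ∈ R ∧ rep s t η (t e) ∈ R ∧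
        rep s t η (s e) ≠ rep s t η (t e)) := by
      simp only [FX, hRmem, Ne, rep_eq]
    have hxi : rep s t η (s e) ≠ rep s t η (t e) → xi p (η e) = - p := by
      intro hne
      have : η e = false := by
        by_contra hh
        apply hne
        rw [rep_eq]
        exact Relation.ReflTransGen.single ⟨e, by simpa using hh, Or.inl ⟨rfl, rfl⟩⟩
      simp [xi, this]
    simp only [hB, hX]
    by_cases h1 : rep s t η (s e) ∈ R <;> by_cases h2 : rep s t η (t e) ∈ R <;>
      by_cases h3 : rep s t η (s e) = rep s t η (t e)
    · simp [h2, h3]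
    · simp [h1, h2, h3, hxi h3]; ring
    · exact absurd (h3 ▸ h1) h2
    · simp [h1, h2]
    · exact absurd (h3 ▸ h2) h1
    · simp [h1, h2, h3]
    · simp [h1, h2]
    · simp [h1, h2]
  have hxi1 : ∀ b, - 1 ≤ xi p b := by
    intro b; cases b <;> simp [xi] <;> linarith
  have hlow : ∀ c ∈ R, - (∑ e ∈ FT s t {c} η, xi p (η e)) ≤ 
      ε * ∑ e, (if e ∈ FT s t {c} η then 1 else 0) + m + 
      ∑ e, (if e ∈ FT s t {c} η then (if Fbad s t p ε m c η then 1 else 0) else 0) := by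
    intro c _
    have hcard : ∑ e, (if e ∈ FT s t {c} η then (1:ℝ) else 0) = (FT s t {c} η).card := by
      rw [← Finset.sum_filter]; simp
    have htriv : - (∑ e ∈ FT s t {c} η, xi p (η e)) ≤ (FT s t {c} η).card := by
      rw [← Finset.sum_neg_distrib]
      calc _ ≤ ∑ e ∈ FT s t {c} η, (1:ℝ) := Finset.sum_le_sum fun e _ => by linarith [hxi1 (η e)]
        _ = _ := by simp
    have hnn : (0:ℝ) ≤ (FT s t {c} η).card := by positivity
    have hm0 : (0:ℝ) ≤ m := by positivity
    have hec : 0 ≤ ε * (FT s t {c} η).card := by positivity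
    rw [hcard]
    by_cases hb : Fbad s t p ε m c η
    · simp only [hb, if_true, hcard]
      linarith
    · simp only [hb, if_false, ite_self, Finset.sum_const_zero, add_zero]
      unfold Fbad at hb
      rw [not_and_or, not_le, not_le] at hb
      rcases hb with hb | hb
      · have : ((FT s t {c} η).card : ℝ) ≤ m := by exact_mod_cast hb.le
        linarith
      · linarith
  have hsum := Finset.sum_le_sum hlow
  rw [Finset.sum_neg_distrib, hid, Finset.sum_add_distrib, Finset.sum_add_distrib, ← Finset.mul_sum,
    Finset.sum_comm (s := R), Finset.sum_comm (s := R)] at hsum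
  have hA : ∑ e, ∑ c ∈ R, (if e ∈ FT s t {c} η then (1:ℝ) else 0) ≤ 2 * Fintype.card E := by
    calc _ ≤ ∑ e : E, (2:ℝ) := Finset.sum_le_sum fun e _ => by
            rw [hcount e (fun _ => 1)]
            split_ifs <;> norm_num
      _ = _ := by simp [mul_comm]
  have hC : ∑ e, ∑ c ∈ R, (if e ∈ FT s t {c} η then (if Fbad s t p ε m c η then (1:ℝ) else 0) else 0) ≤ 
      ∑ e, ((if Fbad s t p ε m (s e) η then 1 else 0) + (if Fbad s t p ε m (t e) η then 1 else 0)) := by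
    refine Finset.sum_le_sum fun e _ => ?_
    rw [hcount e (fun c => if Fbad s t p ε m c η then 1 else 0)]
    have hb : ∀ x, Fbad s t p ε m (rep s t η x) η ↔ Fbad s t p ε m x η := by
      intro x
      unfold Fbad
      rw [FT_rep (rep_eq.1 rep_rep : FK s t η (rep s t η x) x)]
    simp only [hb]
    apply add_le_add <;> split_ifs <;> norm_num
  have hRc : (R.card : ℝ) ≤ B.card := by exact_mod_cast Finset.card_image_le
  have hD : ∑ c ∈ R, (m:ℝ) ≤ m * B.card := by
    rw [Finset.sum_const, nsmul_eq_mul, mul_comm]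
    exact mul_le_mul_of_nonneg_left hRc (by positivity)
  have hA' := mul_le_mul_of_nonneg_left hA hε.le
  linarith

/-- The finite two-arm estimate. -/
lemma finite_estimate {p ε : ℝ} (hp : p ∈ Set.Ioo (0 : ℝ) 1) (hε : 0 < ε) (hεp : ε < p) :
    ∃ ρ : ℝ, 1 < ρ ∧ ∀ (V E : Type) [Fintype E] (s t : E → V) (B : Finset V) (m : ℕ),
      p * ∑ e, ∑ η : E → Bool, wt p η * (if FX s t B η e then 1 else 0) ≤ 
        2 * ε * Fintype.card E + m * B.card + 2 * Fintype.card E * (ρ ^ m)⁻¹ := by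
  obtain ⟨ρ, hρ, H⟩ := stop_ld hp hε hεp
  refine ⟨ρ, hρ, ?_⟩
  intro V E _ s t B m
  have h1 : ∑ η : E → Bool, wt p η * (p * ∑ e, (if FX s t B η e then 1 else 0)) ≤ 
      ∑ η : E → Bool, wt p η * (∑ e ∈ FT s t B η, xi p (η e) + 2 * ε * Fintype.card E + m * B.card +
      ∑ e, ((if Fbad s t p ε m (s e) η then 1 else 0) + (if Fbad s t p ε m (t e) η then 1 else 0))) :=
    Finset.sum_le_sum fun η _ => mul_le_mul_of_nonneg_left (pointwise s t B hp hε m η)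
      (wt_nonneg hp.1 hp.2 η)
  have h2 : ∑ η : E → Bool, wt p η * (p * ∑ e, (if FX s t B η e then 1 else 0)) = 
      p * ∑ e, ∑ η : E → Bool, wt p η * (if FX s t B η e then 1 else 0) := by
    rw [Finset.sum_comm, Finset.mul_sum]
    refine Finset.sum_congr rfl fun η _ => ?_
    rw [← Finset.mul_sum]; ring
  rw [h2] at h1
  refine h1.trans ?_
  simp only [mul_add, Finset.sum_add_distrib]
  rw [stop_mean (FT_stop s t B), ← Finset.sum_mul, ← Finset.sum_mul, wt_sum]
  have h3 : ∀ f : E → V, ∑ η : E → Bool, wt p η * ∑ e, (if Fbad s t p ε m (f e) η then 1 else 0) ≤ 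
      Fintype.card E * (ρ ^ m)⁻¹ := by
    intro f
    simp only [Finset.mul_sum]
    rw [Finset.sum_comm]
    have h6 : ∑ e : E, (ρ ^ m)⁻¹ = Fintype.card E * (ρ ^ m)⁻¹ := by simp
    rw [← h6]
    refine Finset.sum_le_sum fun e _ => ?_
    refine le_trans (le_of_eq (Finset.sum_congr rfl fun η _ => ?_)) (H E _ (FT_stop s t {f e}) m)
    congr 1
    exact if_congr Iff.rfl rfl rfl
  have h4 := h3 s
  have h5 := h3 t
  linarith

end FinitePart

/-! ### Measure part -/
section MeasurePart

lemma cyl_meas {d : ℕ} (s : Finset (Edge d)) (f : Edge d → Bool) :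
    MeasurableSet {ω : Config d | ∀ e ∈ s, ω e = f e} := by
  have : {ω : Config d | ∀ e ∈ s, ω e = f e} = ⋂ e ∈ s, (fun ω : Config d => ω e) ⁻¹' {f e} := by
    ext ω; simp
  rw [this]
  exact Finset.measurableSet_biInter _ fun e _ => measurable_pi_apply e (measurableSet_singleton _)

instance vertex_countable (d : ℕ) : Countable (Vertex d) := inferInstance

instance sym2_countable {α : Type*} [Countable α] : Countable (Sym2 α) :=
  inferInstanceAs (Countable (Quot _))

lemma ext_cyl {d : ℕ} (μ ν : Measure (Config d)) [IsFiniteMeasure μ] [IsFiniteMeasure ν]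
    (h : ∀ (s : Finset (Edge d)) (f : Edge d → Bool),
      μ {ω : Config d | ∀ e ∈ s, ω e = f e} = ν {ω : Config d | ∀ e ∈ s, ω e = f e}) : μ = ν := by
  have h2 : IsProjectiveLimit ν (fun I => μ.map I.restrict) := by
    intro I
    refine Measure.ext_of_singleton fun g => ?_
    have hm : Measurable (I.restrict : Config d → _) := Finset.measurable_restrict I
    rw [Measure.map_apply hm (measurableSet_singleton _), Measure.map_apply hm (measurableSet_singleton _)]
    classical
    have : (I.restrict : Config d → _) ⁻¹' {g} =
        {ω : Config d | ∀ e ∈ I, ω e = (fun e => if h : e ∈ I then g ⟨e, h⟩ else true) e} := by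
      ext ω
      simp only [Set.mem_preimage, Set.mem_singleton_iff, Set.mem_ofPred_eq, funext_iff]
      constructor
      · intro h e he
        simp only [he, dif_pos]
        exact h ⟨e, he⟩
      · rintro h ⟨e, he⟩
        have := h e he
        simp only [he, dif_pos] at this
        exact this
    rw [this, h]
  exact IsProjectiveLimit.unique (P := fun I => μ.map I.restrict) (fun I => rfl) h2

open Classical in
/-- override `ω` by `f` on `s` -/
noncomputable def ovr {d : ℕ} (s : Finset (Edge d)) (f : Edge d → Bool) (ω : Config d) : Config d :=
  fun e => if e ∈ s then f e else ω e

lemma ovr_meas {d : ℕ} (s : Finset (Edge d)) (f : Edge d → Bool) : Measurable (ovr s f) := by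
  refine measurable_pi_lambda _ fun e => ?_
  by_cases he : e ∈ s
  · simp only [ovr, he, if_true]; exact measurable_const
  · simp only [ovr, he, if_false]; exact measurable_pi_apply e

lemma prod_nonneg' {d : ℕ} {p : ℝ} (hp : p ∈ Set.Ioo (0 : ℝ) 1) (s : Finset (Edge d)) (f : Edge d → Bool) :
    0 < ∏ e ∈ s, if f e then p else 1 - p := 
  Finset.prod_pos fun e _ => by obtain ⟨h0, h1⟩ := hp; split_ifs <;> linarith

lemma ovr_indep {d : ℕ} {p : ℝ} (hp : p ∈ Set.Ioo (0 : ℝ) 1) {μ : Measure (Config d)}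
    (hμ : IsBernoulli d p μ) (s : Finset (Edge d)) (f : Edge d → Bool) {B : Set (Config d)}
    (hB : MeasurableSet B) :
    μ (ovr s f ⁻¹' B ∩ {ω : Config d | ∀ e ∈ s, ω e = f e}) = 
      μ {ω : Config d | ∀ e ∈ s, ω e = f e} * μ (ovr s f ⁻¹' B) := by
  classical
  have := hμ.1
  set A := {ω : Config d | ∀ e ∈ s, ω e = f e} with hA
  have hAm : MeasurableSet A := cyl_meas s f
  have hAfin : μ A ≠ ⊤ := measure_ne_top μ A
  have key : (μ.restrict A).map (ovr s f) = (μ A).toNNReal • (μ.map (ovr s f)) := by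
    have i1 : IsFiniteMeasure ((μ.restrict A).map (ovr s f)) := by infer_instance
    have i2 : IsFiniteMeasure ((μ A).toNNReal • (μ.map (ovr s f))) := by infer_instance
    refine ext_cyl _ _ fun t g => ?_
    rw [Measure.map_apply (ovr_meas s f) (cyl_meas t g), Measure.smul_apply,
      Measure.map_apply (ovr_meas s f) (cyl_meas t g),
      Measure.restrict_apply (ovr_meas s f (cyl_meas t g)), ENNReal.smul_def, smul_eq_mul,
      ENNReal.coe_toNNReal hAfin]
    by_cases hfg : ∀ e ∈ t, e ∈ s → f e = g e
    · have h1 : ovr s f ⁻¹' {ω : Config d | ∀ e ∈ t, ω e = g e} = {ω : Config d | ∀ e ∈ t \ s, ω e = g e} := by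
        ext ω
        simp only [Set.mem_preimage, Set.mem_ofPred_eq, ovr, Finset.mem_sdiff]
        constructor
        · rintro h e ⟨h1, h2⟩
          simpa [h2] using h e h1
        · intro h e he
          by_cases hs : e ∈ s
          · simpa [hs] using hfg e he hs
          · simpa [hs] using h e ⟨he, hs⟩
      have h2 : {ω : Config d | ∀ e ∈ t \ s, ω e = g e} ∩ A =
          {ω : Config d | ∀ e ∈ s ∪ (t \ s), ω e = (fun e => if e ∈ s then f e else g e) e} := by
        ext ω
        simp only [Set.mem_inter_iff, Set.mem_ofPred_eq, hA, Finset.mem_union, Finset.mem_sdiff]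
        constructor
        · rintro ⟨h1, h2⟩ e (h | h)
          · simpa [h] using h2 e h
          · simpa [h.2] using h1 e h
        · intro h
          refine ⟨fun e he => ?_, fun e he => ?_⟩
          · simpa [he.2] using h e (Or.inr he)
          · simpa [he] using h e (Or.inl he)
      rw [h1, h2, hA, hμ.2, hμ.2, hμ.2, ← ENNReal.ofReal_mul (prod_nonneg' hp _ _).le,
        Finset.prod_union Finset.disjoint_sdiff]
      congr 2
      · exact Finset.prod_congr rfl fun e he => by simp [he]
      · exact Finset.prod_congr rfl fun e he => by simp [(Finset.mem_sdiff.1 he).2]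
    · have h1 : ovr s f ⁻¹' {ω : Config d | ∀ e ∈ t, ω e = g e} = ∅ := by
        ext ω
        simp only [Set.mem_preimage, Set.mem_ofPred_eq, Set.mem_empty_iff_false, iff_false]
        intro h
        apply hfg
        intro e he hs
        simpa [ovr, hs] using h e he
      rw [h1]; simp
  have := congrArg (fun ν : Measure (Config d) => ν B) key
  simp only [Measure.smul_apply] at this
  rw [Measure.map_apply (ovr_meas s f) hB, Measure.map_apply (ovr_meas s f) hB,
    Measure.restrict_apply (ovr_meas s f hB), ENNReal.smul_def, smul_eq_mul,
      ENNReal.coe_toNNReal hAfin] at this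
  exact this

lemma cyl_pos {d : ℕ} {p : ℝ} (hp : p ∈ Set.Ioo (0 : ℝ) 1) {μ : Measure (Config d)}
    (hμ : IsBernoulli d p μ) (s : Finset (Edge d)) (f : Edge d → Bool) :
    μ {ω : Config d | ∀ e ∈ s, ω e = f e} ≠ 0 := by
  rw [hμ.2]; simpa using prod_nonneg' hp s f

/-- finite energy -/
lemma finite_energy {d : ℕ} {p : ℝ} (hp : p ∈ Set.Ioo (0 : ℝ) 1) {μ : Measure (Config d)}
    (hμ : IsBernoulli d p μ) (s : Finset (Edge d)) (f : Edge d → Bool) {N : Set (Config d)}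
    (hN : μ N = 0) : μ (ovr s f ⁻¹' N) = 0 := by
  have h0 : μ (toMeasurable μ N) = 0 := by rw [measure_toMeasurable, hN]
  have h1 := ovr_indep hp hμ s f (measurableSet_toMeasurable μ N)
  have h2 : ovr s f ⁻¹' (toMeasurable μ N) ∩ {ω : Config d | ∀ e ∈ s, ω e = f e} ⊆ toMeasurable μ N := by
    rintro ω ⟨h, h'⟩
    have : ovr s f ω = ω := by
      ext e
      by_cases he : e ∈ s
      · simp [ovr, he, h' e he]
      · simp [ovr, he]
    rwa [Set.mem_preimage, this] at h
  rw [measure_mono_null h2 h0] at h1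
  have h3 := (mul_eq_zero.1 h1.symm).resolve_left (cyl_pos hp hμ s f)
  exact measure_mono_null (Set.preimage_mono (subset_toMeasurable μ N)) h3

/-- zero-one law for events insensitive to finite modifications -/
lemma zero_one {d : ℕ} {p : ℝ} (hp : p ∈ Set.Ioo (0 : ℝ) 1) {μ : Measure (Config d)}
    (hμ : IsBernoulli d p μ) {A : Set (Config d)} (hA : MeasurableSet A)
    (hinv : ∀ s f, ovr s f ⁻¹' A = A) (hpos : μ A ≠ 0) : μ Aᶜ = 0 := by
  have := hμ.1
  have key : μ.restrict A = (μ A).toNNReal • μ := by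
    refine ext_cyl _ _ fun s f => ?_
    rw [Measure.restrict_apply (cyl_meas s f), Measure.smul_apply, ENNReal.smul_def, smul_eq_mul,
      ENNReal.coe_toNNReal (measure_ne_top μ A), Set.inter_comm]
    have := ovr_indep hp hμ s f hA
    rw [hinv] at this
    rw [this, mul_comm]
  have := congrArg (fun ν : Measure (Config d) => ν Aᶜ) key
  simp only [Measure.smul_apply] at this
  rw [Measure.restrict_apply hA.compl, ENNReal.smul_def, smul_eq_mul,
      ENNReal.coe_toNNReal (measure_ne_top μ A)] at this
  simp at this
  tauto

/-! ### Clusters -/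

lemma adj_symm {d : ℕ} {x y : Vertex d} (h : adj x y) : adj y x := by
  unfold adj at *
  rw [← h]
  exact Finset.sum_congr rfl fun i _ => by omega

lemma step_symm {d : ℕ} {ω : Config d} {x y : Vertex d} (h : step ω x y) : step ω y x := by
  obtain ⟨h, h'⟩ := h
  refine ⟨adj_symm h, ?_⟩
  rw [← h']
  congr 2
  exact Sym2.eq_swap

lemma Conn.symm {d : ℕ} {ω : Config d} {x y : Vertex d} (h : Conn ω x y) : Conn ω y x := by
  have : Std.Symm (step ω) := ⟨fun _ _ => step_symm⟩
  exact Std.Symm.symm (r := Relation.ReflTransGen (step ω)) _ _ h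

lemma cluster_eq {d : ℕ} {ω : Config d} {x y : Vertex d} (h : Conn ω x y) :
    cluster ω x = cluster ω y := by
  ext z
  exact ⟨fun h' => h.symm.trans h', fun h' => h.trans h'⟩

lemma step_meas {d : ℕ} (x y : Vertex d) : MeasurableSet {ω : Config d | step ω x y} := by
  by_cases h : adj x y
  · have : {ω : Config d | step ω x y} = (fun ω : Config d => ω ⟨s(x, y), x, y, h, rfl⟩) ⁻¹' {true} := by
      ext ω; simp [step, h]
    rw [this]
    exact measurable_pi_apply _ (measurableSet_singleton _)
  · have : {ω : Config d | step ω x y} = ∅ := by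
      ext ω; simp [step, h]
    rw [this]; exact MeasurableSet.empty

def ConnN {d : ℕ} (ω : Config d) (x : Vertex d) : ℕ → Vertex d → Prop
  | 0, y => x = y
  | n + 1, y => ∃ z, ConnN ω x n z ∧ step ω z y

lemma conn_iff {d : ℕ} (ω : Config d) (x y : Vertex d) : Conn ω x y ↔ ∃ n, ConnN ω x n y := by
  constructor
  · intro h
    induction h with
    | refl => exact ⟨0, rfl⟩
    | tail _ h ih =>
      obtain ⟨n, hn⟩ := ih
      exact ⟨n + 1, _, hn, h⟩
  · rintro ⟨n, hn⟩
    induction n generalizing y with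
    | zero => rw [ConnN] at hn; rw [hn]; exact Relation.ReflTransGen.refl
    | succ n ih =>
      obtain ⟨z, h1, h2⟩ := hn
      exact (ih z h1).tail h2

lemma conn_meas {d : ℕ} (x y : Vertex d) : MeasurableSet {ω : Config d | Conn ω x y} := by
  simp only [conn_iff]
  rw [Set.ofPred_exists]
  refine MeasurableSet.iUnion fun n => ?_
  induction n generalizing y with
  | zero => exact MeasurableSet.const _
  | succ n ih =>
    simp only [ConnN]
    rw [Set.ofPred_exists]
    exact MeasurableSet.iUnion fun z => (ih z).inter (step_meas z y)

lemma inf_meas {d : ℕ} (x : Vertex d) : MeasurableSet {ω : Config d | (cluster ω x).Infinite} := by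
  have : {ω : Config d | (cluster ω x).Infinite} =
      ⋂ F : Finset (Vertex d), ⋃ y : {y : Vertex d // y ∉ F}, {ω | Conn ω x y} := by
    ext ω
    simp only [Set.mem_ofPred_eq, Set.mem_iInter, Set.mem_iUnion]
    constructor
    · intro h F
      obtain ⟨y, hy, hF⟩ := h.exists_notMem_finset F
      exact ⟨⟨y, hF⟩, hy⟩
    · intro h hfin
      obtain ⟨⟨y, hy⟩, hc⟩ := h hfin.toFinset
      exact hy (hfin.mem_toFinset.2 hc)
  rw [this]
  exact MeasurableSet.iInter fun F => MeasurableSet.iUnion fun y => conn_meas x y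

lemma inf_exists_of_ovr {d : ℕ} (ω ω' : Config d) (s : Finset (Edge d)) (h : ∀ e, e ∉ s → ω e = ω' e)
    (hx : ∃ x, (cluster ω x).Infinite) : ∃ x, (cluster ω' x).Infinite := by
  by_contra hcon
  simp only [not_exists, Set.not_infinite] at hcon
  obtain ⟨x, hx⟩ := hx
  apply hx
  have hfin : (cluster ω' x ∪ ⋃ e ∈ s, ⋃ v ∈ {v : Vertex d | v ∈ e.1}, cluster ω' v).Finite := by
    refine (hcon x).union (Set.Finite.biUnion s.finite_toSet fun e _ => ?_)
    refine Set.Finite.biUnion ?_ fun v _ => hcon v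
    obtain ⟨e, he⟩ := e
    induction e using Sym2.inductionOn with
    | hf a b =>
      refine (Set.toFinite {a, b}).subset ?_
      intro v hv
      simpa using hv
  refine hfin.subset fun y hy => ?_
  change Conn ω x y at hy
  induction hy with
  | refl => exact Or.inl Relation.ReflTransGen.refl
  | @tail y z _ hst ih =>
    obtain ⟨ha, ho⟩ := hst
    by_cases he : (⟨s(y, z), y, z, ha, rfl⟩ : Edge d) ∈ s
    · right
      simp only [Set.mem_iUnion]
      exact ⟨_, he, z, by simp, Relation.ReflTransGen.refl⟩
    · rw [h _ he] at ho
      rcases ih with ih | ih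
      · left; exact Relation.ReflTransGen.tail ih ⟨ha, ho⟩
      · right
        simp only [Set.mem_iUnion] at ih ⊢
        obtain ⟨e, he, v, hv, hc⟩ := ih
        exact ⟨e, he, v, hv, Relation.ReflTransGen.tail hc ⟨ha, ho⟩⟩

lemma existence {d : ℕ} {p : ℝ} (hp : p ∈ Set.Ioo (0 : ℝ) 1) {μ : Measure (Config d)}
    (hμ : IsBernoulli d p μ) (hθ : 0 < μ (ZeroToInfinity d)) :
    ∀ᵐ ω ∂μ, ∃ x, (cluster ω x).Infinite := by
  refine zero_one hp hμ (A := {ω : Config d | ∃ x, (cluster ω x).Infinite}) ?_ ?_ ?_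
  · rw [Set.ofPred_exists]
    exact MeasurableSet.iUnion fun x => inf_meas x
  · intro s f
    ext ω
    simp only [Set.mem_preimage, Set.mem_ofPred_eq]
    constructor
    · exact inf_exists_of_ovr _ _ s fun e he => by simp [ovr, he]
    · exact inf_exists_of_ovr _ _ s fun e he => by simp [ovr, he]
  · refine (lt_of_lt_of_le hθ (measure_mono ?_)).ne'
    intro ω h
    exact ⟨_, h⟩

/-! ### Merging -/

/-- some edge joins two distinct infinite clusters -/
def TwoArm {d : ℕ} (ω : Config d) : Prop :=
  ∃ u v : Vertex d, adj u v ∧ (cluster ω u).Infinite ∧ (cluster ω v).Infinite ∧ ¬ Conn ω u v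

lemma ovr_ovr {d : ℕ} (s t : Finset (Edge d)) (ω : Config d) :
    ∃ r : Finset (Edge d), ovr s (fun _ => true) (ovr t (fun _ => true) ω) = ovr r (fun _ => true) ω := by
  classical
  refine ⟨s ∪ t, ?_⟩
  ext e
  by_cases h1 : e ∈ s <;> by_cases h2 : e ∈ t <;> simp [ovr, h1, h2]

lemma merge {d : ℕ} {x y : Vertex d} (hxy : Relation.ReflTransGen adj x y) :
    ∀ ω : Config d, (∀ s, ¬ TwoArm (ovr s (fun _ => true) ω)) →
      (cluster ω x).Infinite → (cluster ω y).Infinite → Conn ω x y := by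
  induction hxy using Relation.ReflTransGen.head_induction_on with
  | refl => intro ω _ _ _; exact Relation.ReflTransGen.refl
  | @head x x' ha _ ih =>
    intro ω hω hx hy
    by_cases hx' : (cluster ω x').Infinite
    · have h1 : Conn ω x x' := by
        by_contra hc
        apply hω ∅
        have : ovr ∅ (fun _ => true) ω = ω := by ext e; simp [ovr]
        rw [this]
        exact ⟨x, x', ha, hx, hx', hc⟩
      exact h1.trans (ih ω hω hx' hy)
    · set e : Edge d := ⟨s(x, x'), x, x', ha, rfl⟩ with he
      set ω' := ovr {e} (fun _ => true) ω with hω'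
      have hmono : ∀ a b, Conn ω a b → Conn ω' a b := by
        intro a b hab
        refine Relation.ReflTransGen.mono (?_ : step ω ≤ step ω') _ _ hab
        rintro a b ⟨h1, h2⟩
        refine ⟨h1, ?_⟩
        simp only [hω', ovr]
        split_ifs
        · rfl
        · exact h2
      have hst : step ω' x' x := step_symm ⟨ha, by simp [hω', ovr, he]⟩
      have h1 : (cluster ω' x').Infinite := hx.mono fun z hz => 
        Relation.ReflTransGen.head hst (hmono _ _ hz)
      have h2 : (cluster ω' y).Infinite := hy.mono fun z hz => hmono _ _ hz
      have h3 : Conn ω' x' y := by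
        refine ih ω' (fun s => ?_) h1 h2
        obtain ⟨r, hr⟩ := ovr_ovr s {e} ω
        rw [hω', hr]
        exact hω r
      have h4 : ∀ z, Conn ω' x' z → Conn ω x z ∨ Conn ω x' z := by
        intro z hz
        induction hz with
        | refl => exact Or.inr Relation.ReflTransGen.refl
        | @tail a b _ hs ih =>
          obtain ⟨hab, ho⟩ := hs
          by_cases heq : (⟨s(a, b), a, b, hab, rfl⟩ : Edge d) = e
          · have heq := Sym2.eq_iff.1 (congrArg Subtype.val heq)
            rcases heq with ⟨_, rfl⟩ | ⟨_, rfl⟩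
            · exact Or.inr Relation.ReflTransGen.refl
            · exact Or.inl Relation.ReflTransGen.refl
          · have ho' : step ω a b := ⟨hab, by simpa [hω', ovr, heq] using ho⟩
            exact ih.imp (fun h => h.tail ho') (fun h => h.tail ho')
      rcases h4 y h3 with h | h
      · exact h
      · rw [cluster_eq h] at hx'
        exact absurd hy hx'

end MeasurePart

/-! ### Translation invariance -/
section Translation

lemma adj_add {d : ℕ} {x y : Vertex d} (z : Vertex d) (h : adj x y) : adj (x + z) (y + z) := by
  unfold adj at *
  rw [← h]
  exact Finset.sum_congr rfl fun i _ => by simp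

/-- translation of edges -/
def shE {d : ℕ} (z : Vertex d) (e : Edge d) : Edge d :=
  ⟨Sym2.map (fun x => x + z) e.1, by
    obtain ⟨x, y, h, he⟩ := e.2
    exact ⟨x + z, y + z, adj_add z h, by rw [he]; rfl⟩⟩

lemma shE_neg {d : ℕ} (z : Vertex d) (e : Edge d) : shE (-z) (shE z e) = e := by
  apply Subtype.ext
  simp only [shE, Sym2.map_map]
  have : ((fun x : Vertex d => x + -z) ∘ fun x => x + z) = id := by
    ext x; simp
  rw [this, Sym2.map_id]; rfl

/-- translation of configurations -/
def shC {d : ℕ} (z : Vertex d) (ω : Config d) : Config d := fun e => ω (shE z e)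

lemma shC_meas {d : ℕ} (z : Vertex d) : Measurable (shC (d := d) z) :=
  measurable_pi_lambda _ fun e => measurable_pi_apply (shE z e)

lemma shC_neg {d : ℕ} (z : Vertex d) (ω : Config d) : shC z (shC (-z) ω) = ω := by
  ext e
  simp only [shC]
  rw [shE_neg]

lemma shC_map {d : ℕ} {p : ℝ} {μ : Measure (Config d)} (hμ : IsBernoulli d p μ) (z : Vertex d) :
    μ.map (shC z) = μ := by
  classical
  have := hμ.1
  refine ext_cyl _ _ fun s f => ?_
  rw [Measure.map_apply (shC_meas z) (cyl_meas s f)]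
  have h1 : shC z ⁻¹' {ω : Config d | ∀ e ∈ s, ω e = f e} = 
      {ω : Config d | ∀ e ∈ s.image (shE z), ω e = (fun e => f (shE (-z) e)) e} := by
    ext ω
    simp only [Set.mem_preimage, Set.mem_ofPred_eq, Finset.mem_image, shC]
    constructor
    · rintro h _ ⟨e, he, rfl⟩
      rw [shE_neg]; exact h e he
    · intro h e he
      have := h _ ⟨e, he, rfl⟩
      rwa [shE_neg] at this
  rw [h1, hμ.2, hμ.2, Finset.prod_image]
  · simp only [shE_neg]
  · intro a _ b _ hab
    rw [← shE_neg z a, hab, shE_neg]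

lemma shC_conn_aux {d : ℕ} {ω : Config d} {z x y : Vertex d} (h : Conn (shC z ω) x y) :
    Conn ω (x + z) (y + z) := by
  induction h with
  | refl => exact Relation.ReflTransGen.refl
  | tail _ hs ih =>
    obtain ⟨ha, ho⟩ := hs
    exact ih.tail ⟨adj_add z ha, ho⟩

lemma shC_conn {d : ℕ} {ω : Config d} {z x y : Vertex d} : Conn (shC z ω) x y ↔
    Conn ω (x + z) (y + z) := by
  refine ⟨shC_conn_aux, fun h => ?_⟩
  have h2 : shC (-z) (shC z ω) = ω := by
    have := shC_neg (-z) ω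
    rwa [neg_neg] at this
  rw [← h2] at h
  have := shC_conn_aux h
  simpa using this

lemma shC_inf {d : ℕ} {ω : Config d} {z x : Vertex d} :
    (cluster (shC z ω) x).Infinite ↔ (cluster ω (x + z)).Infinite := by
  have : cluster ω (x + z) = (fun y => y + z) '' cluster (shC z ω) x := by
    ext y
    simp only [cluster, Set.mem_ofPred_eq, Set.mem_image, shC_conn]
    constructor
    · intro h; exact ⟨y - z, by simpa using h, by simp⟩
    · rintro ⟨w, h, rfl⟩; exact h
  rw [this, Set.infinite_image_iff (add_left_injective z).injOn]

/-- unit vector -/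
def uv {d : ℕ} (i : Fin d) : Vertex d := Pi.single i 1

/-- the two-arm event at the edge `(x, x + e_i)` -/
def DD {d : ℕ} (i : Fin d) (x : Vertex d) : Set (Config d) :=
  {ω | (cluster ω x).Infinite ∧ (cluster ω (x + uv i)).Infinite ∧ ¬ Conn ω x (x + uv i)}

lemma DD_meas {d : ℕ} (i : Fin d) (x : Vertex d) : MeasurableSet (DD i x) :=
  (inf_meas x).inter ((inf_meas _).inter (conn_meas _ _).compl)

lemma DD_shift {d : ℕ} {p : ℝ} {μ : Measure (Config d)} (hμ : IsBernoulli d p μ) (i : Fin d)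
    (x : Vertex d) : μ (DD i x) = μ (DD i 0) := by
  conv_rhs => rw [← shC_map hμ x, Measure.map_apply (shC_meas x) (DD_meas i 0)]
  congr 1
  ext ω
  simp only [DD, Set.mem_ofPred_eq, Set.mem_preimage, shC_conn, shC_inf, zero_add]
  rw [add_comm (uv i) x]

lemma adj_uv {d : ℕ} (x : Vertex d) (i : Fin d) : adj x (x + uv i) := by
  unfold adj
  rw [Finset.sum_eq_single i]
  · simp [uv]
  · intro j _ hj; simp [uv, hj]
  · simp

lemma adj_cases {d : ℕ} {x y : Vertex d} (h : adj x y) : ∃ i, y = x + uv i ∨ x = y + uv i := by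
  unfold adj at h
  obtain ⟨i, _, hi⟩ := Finset.exists_ne_zero_of_sum_ne_zero (h.trans_ne one_ne_zero)
  have h1 := Finset.add_sum_erase Finset.univ (fun i => (x i - y i).natAbs) (Finset.mem_univ i)
  have h2 : ∑ j ∈ Finset.univ.erase i, (x j - y j).natAbs = 0 := by omega
  have h3 : ∀ j, j ≠ i → x j = y j := by
    intro j hj
    have := (Finset.sum_eq_zero_iff.1 h2) j (by simp [hj])
    omega
  refine ⟨i, ?_⟩
  have h4 : y i = x i + 1 ∨ x i = y i + 1 := by omega
  rcases h4 with h4 | h4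
  · left; ext j
    by_cases hj : j = i
    · subst hj; simp [uv, h4]
    · simp [uv, hj, h3 j hj]
  · right; ext j
    by_cases hj : j = i
    · subst hj; simp [uv, h4]
    · simp [uv, hj, h3 j hj]

lemma uv_apply {d : ℕ} (i j : Fin d) : uv i j = 0 ∨ uv i j = 1 := by
  by_cases h : j = i
  · subst h; right; simp [uv]
  · left; simp [uv, h]

/-- edges from directed representation -/
def mkE {d : ℕ} (x : Vertex d) (i : Fin d) : Edge d := ⟨s(x, x + uv i), x, x + uv i, adj_uv x i, rfl⟩

lemma mkE_inj {d : ℕ} {x y : Vertex d} {i j : Fin d} (h : mkE x i = mkE y j) : x = y ∧ i = j := by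
  have h := Sym2.eq_iff.1 (congrArg Subtype.val h)
  rcases h with ⟨rfl, h⟩ | ⟨h1, h2⟩
  · refine ⟨rfl, ?_⟩
    by_contra hij
    have := congrFun (add_left_cancel h) i
    simp [uv, hij] at this
  · exfalso
    rw [h1, add_assoc] at h2
    have h3 : uv j + uv i = 0 := by simpa using h2
    have := congrFun h3 i
    have h4 : uv i i = 1 := by simp [uv]
    have h5 := uv_apply j i
    simp only [Pi.add_apply, Pi.zero_apply] at this
    omega

/-- finite box -/
noncomputable def fbox (d n : ℕ) : Finset (Vertex d) := Fintype.piFinset fun _ => Finset.Icc (-(n:ℤ)) n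

lemma mem_fbox {d n : ℕ} {x : Vertex d} : x ∈ fbox d n ↔ ∀ i, -(n:ℤ) ≤ x i ∧ x i ≤ n := by
  simp [fbox]

lemma card_fbox (d n : ℕ) : (fbox d n).card = (2 * n + 1) ^ d := by
  simp only [fbox, Fintype.card_piFinset, Int.card_Icc, Finset.prod_const, Finset.card_univ, Fintype.card_fin]
  congr 1
  omega

lemma fbox_mono {d n m : ℕ} (h : n ≤ m) : fbox d n ⊆ fbox d m := by
  intro x hx
  rw [mem_fbox] at *
  intro i
  have := hx i
  omega

abbrev BE (d n : ℕ) := {x // x ∈ fbox d (n + 1)} × Fin d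

def Bs {d n : ℕ} (e : BE d n) : Vertex d := e.1.1
def Bt {d n : ℕ} (e : BE d n) : Vertex d := e.1.1 + uv e.2
noncomputable def BB (d n : ℕ) : Finset (Vertex d) := fbox d (n + 2) \ fbox d n
def Bi {d n : ℕ} (e : BE d n) : Edge d := mkE e.1.1 e.2

lemma Bi_inj {d n : ℕ} : Function.Injective (Bi (d := d) (n := n)) := by
  rintro ⟨⟨x, hx⟩, i⟩ ⟨⟨y, hy⟩, j⟩ h
  obtain ⟨rfl, rfl⟩ := mkE_inj h
  rfl

lemma FK_conn {d n : ℕ} {ω : Config d} {u v : Vertex d}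
    (h : FK (Bs (n := n)) Bt (fun e => ω (Bi e)) u v) : Conn ω u v := by
  refine Relation.ReflTransGen.mono (?_ : FR (Bs (n := n)) Bt (fun e => ω (Bi e)) ≤ step ω) _ _ h
  rintro a b ⟨e, ho, ⟨rfl, rfl⟩ | ⟨rfl, rfl⟩⟩
  · exact ⟨adj_uv _ _, ho⟩
  · exact step_symm ⟨adj_uv _ _, ho⟩

lemma reach_boundary {d n : ℕ} {ω : Config d} {u : Vertex d} (hu : u ∈ fbox d (n + 2))
    (h : (cluster ω u).Infinite) : ∃ b ∈ BB d n, FK (Bs (n := n)) Bt (fun e => ω (Bi e)) b u := by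
  by_contra hcon
  apply h
  refine (fbox d (n + 2)).finite_toSet.subset ?_
  intro y hy
  have : y ∈ fbox d (n + 2) ∧ FK (Bs (n := n)) Bt (fun e => ω (Bi e)) u y := by
    change Conn ω u y at hy
    induction hy with
    | refl => exact ⟨hu, Relation.ReflTransGen.refl⟩
    | @tail y z _ hs ih =>
      obtain ⟨ih1, ih2⟩ := ih
      have hyn : y ∈ fbox d n := by
        by_contra hyn
        exact hcon ⟨y, Finset.mem_sdiff.2 ⟨ih1, hyn⟩, ih2.symm⟩
      obtain ⟨ha, ho⟩ := hs
      have hy1 : y ∈ fbox d (n + 1) := fbox_mono (by omega) hyn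
      obtain ⟨i, rfl | rfl⟩ := adj_cases ha
      · refine ⟨?_, ih2.tail ⟨(⟨y, hy1⟩, i), ho, Or.inl ⟨rfl, rfl⟩⟩⟩
        rw [mem_fbox] at *
        intro j
        have := hyn j
        have := uv_apply i j
        simp only [Pi.add_apply]
        push_cast
        omega
      · have hz1 : z ∈ fbox d (n + 1) := by
          rw [mem_fbox] at *
          intro j
          have := hyn j
          have := uv_apply i j
          simp only [Pi.add_apply] at *
          push_cast
          omega
        refine ⟨fbox_mono (by omega) hz1, ih2.tail ⟨(⟨z, hz1⟩, i), ?_, Or.inr ⟨rfl, rfl⟩⟩⟩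
        rw [← ho]
        simp only [Bi, mkE]
        congr 2
        exact Sym2.eq_swap
  exact this.1

lemma DD_FX {d n : ℕ} {ω : Config d} (e : BE d n) (h : ω ∈ DD e.2 e.1.1) :
    FX (Bs (n := n)) Bt (BB d n) (fun e => ω (Bi e)) e := by
  obtain ⟨h1, h2, h3⟩ := h
  refine ⟨reach_boundary (fbox_mono (by omega) e.1.2) h1, reach_boundary ?_ h2, fun h => h3 (FK_conn h)⟩
  have := e.1.2
  rw [mem_fbox] at *
  intro j
  have := this j
  have := uv_apply e.2 j
  simp only [Bt, Pi.add_apply]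
  push_cast at *
  omega

lemma law {d n : ℕ} {p : ℝ} {μ : Measure (Config d)} (hμ : IsBernoulli d p μ) (η : BE d n → Bool) :
    μ {ω | (fun e => ω (Bi e)) = η} = ENNReal.ofReal (wt p η) := by
  classical
  have : {ω : Config d | (fun e => ω (Bi e)) = η} = 
      {ω | ∀ e ∈ Finset.univ.image (Bi (d := d) (n := n)), ω e = Function.extend Bi η (fun _ => true) e} := by
    ext ω
    simp only [Set.mem_ofPred_eq, Finset.mem_image, Finset.mem_univ, true_and, funext_iff]
    constructor
    · rintro h _ ⟨e, rfl⟩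
      rw [Bi_inj.extend_apply]; exact h e
    · intro h e
      have := h _ ⟨e, rfl⟩
      rwa [Bi_inj.extend_apply] at this
  rw [this, hμ.2, Finset.prod_image (Bi_inj.injOn)]
  simp only [Bi_inj.extend_apply]
  rfl

open Classical in
lemma DD_le {d n : ℕ} {p : ℝ} (hp : p ∈ Set.Ioo (0 : ℝ) 1) {μ : Measure (Config d)}
    (hμ : IsBernoulli d p μ) (e : BE d n) :
    (μ (DD e.2 0)).toReal ≤ ∑ η : BE d n → Bool, wt p η * (if FX Bs Bt (BB d n) η e then 1 else 0) := by
  rw [← DD_shift hμ e.2 e.1.1]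
  have h0 : ∀ η : BE d n → Bool, 0 ≤ wt p η * (if FX Bs Bt (BB d n) η e then 1 else 0) :=
    fun η => mul_nonneg (wt_nonneg hp.1 hp.2 η) (by split_ifs <;> norm_num)
  refine ENNReal.toReal_le_of_le_ofReal (Finset.sum_nonneg fun η _ => h0 η) ?_
  rw [ENNReal.ofReal_sum_of_nonneg fun η _ => h0 η]
  have hsub : DD e.2 e.1.1 ⊆ ⋃ η ∈ (Finset.univ.filter fun η : BE d n → Bool => FX Bs Bt (BB d n) η e),
      {ω : Config d | (fun e => ω (Bi e)) = η} := by
    intro ω hω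
    simp only [Set.mem_iUnion]
    exact ⟨_, Finset.mem_filter.2 ⟨Finset.mem_univ _, DD_FX e hω⟩, rfl⟩
  refine (measure_mono hsub).trans ((measure_biUnion_finset_le _ _).trans ?_)
  rw [Finset.sum_filter]
  refine Finset.sum_le_sum fun η _ => ?_
  split_ifs with h
  · rw [law hμ, mul_one]
  · simp

lemma finite_estimate2 {p ε : ℝ} (hp : p ∈ Set.Ioo (0 : ℝ) 1) (hε : 0 < ε) (hεp : ε < p) :
    ∃ ρ : ℝ, 1 < ρ ∧ ∀ (V E : Type) [Fintype E] [DecidableEq E] (s t : E → V) (B : Finset V)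
      (F : (E → Bool) → E → ℝ) (_ : ∀ η e, FX s t B η e → F η e = 1)
      (_ : ∀ η e, ¬ FX s t B η e → F η e = 0) (m : ℕ),
      p * ∑ e, ∑ η : E → Bool, wt p η * F η e ≤
        2 * ε * Fintype.card E + m * B.card + 2 * Fintype.card E * (ρ ^ m)⁻¹ := by
  obtain ⟨ρ, hρ, H⟩ := finite_estimate hp hε hεp
  refine ⟨ρ, hρ, ?_⟩
  intro V E _ _ s t B F hF1 hF0 m
  refine le_trans (le_of_eq ?_) (H V E s t B m)
  congr 1
  refine Finset.sum_congr rfl fun e _ => ?_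
  refine Finset.sum_congr (by ext; simp) fun η _ => ?_
  by_cases h : FX s t B η e
  · rw [hF1 η e h, if_pos h]
  · rw [hF0 η e h, if_neg h]

lemma DD_bound {d : ℕ} {p : ℝ} (hp : p ∈ Set.Ioo (0 : ℝ) 1) {μ : Measure (Config d)}
    (hμ : IsBernoulli d p μ) (i : Fin d) {ε : ℝ} (hε : 0 < ε) (hεp : ε < p) : 
    ∃ ρ : ℝ, 1 < ρ ∧ ∀ n m : ℕ, p * (μ (DD i 0)).toReal ≤ 
      2 * ε * d + m * (((2 * (n:ℝ) + 5) ^ d - (2 * (n:ℝ) + 1) ^ d) / (2 * (n:ℝ) + 3) ^ d) + 2 * d * (ρ ^ m)⁻¹ := by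
  classical
  obtain ⟨ρ, hρ, H⟩ := finite_estimate2 hp hε hεp
  refine ⟨ρ, hρ, fun n m => ?_⟩
  have h1 := H (Vertex d) (BE d n) Bs Bt (BB d n)
    (fun η e => if FX Bs Bt (BB d n) η e then 1 else 0)
    (fun η e h => if_pos h) (fun η e h => if_neg h) m
  have hcE : (Fintype.card (BE d n) : ℝ) = (2 * (n:ℝ) + 3) ^ d * d := by
    simp only [Fintype.card_prod, Fintype.card_coe, card_fbox, Fintype.card_fin]
    push_cast
    ring
  have hcB : ((BB d n).card : ℝ) = (2 * (n:ℝ) + 5) ^ d - (2 * (n:ℝ) + 1) ^ d := by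
    rw [BB, Finset.card_sdiff_of_subset (fbox_mono (by omega)), Nat.cast_sub (Finset.card_le_card (fbox_mono (by omega))),
      card_fbox, card_fbox]
    push_cast
    ring
  have hlow : (2 * (n:ℝ) + 3) ^ d * (μ (DD i 0)).toReal ≤ 
      ∑ e : BE d n, ∑ η : BE d n → Bool, wt p η * (if FX Bs Bt (BB d n) η e then 1 else 0) := by
    calc _ = ∑ x : {x // x ∈ fbox d (n + 1)}, (μ (DD i 0)).toReal := by
            simp only [Finset.sum_const, Finset.card_univ, Fintype.card_coe, card_fbox, nsmul_eq_mul]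
            push_cast
            ring
      _ ≤ ∑ x : {x // x ∈ fbox d (n + 1)}, ∑ j : Fin d, (μ (DD j 0)).toReal := by
            refine Finset.sum_le_sum fun x _ => ?_
            exact Finset.single_le_sum (f := fun j => (μ (DD j 0)).toReal)
              (fun j _ => ENNReal.toReal_nonneg) (Finset.mem_univ i)
      _ = ∑ e : BE d n, (μ (DD e.2 0)).toReal := by rw [Fintype.sum_prod_type]
      _ ≤ _ := Finset.sum_le_sum fun e _ => DD_le hp hμ e
  rw [hcE, hcB] at h1
  have hL : 0 < (2 * (n:ℝ) + 3) ^ d := by positivity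
  have h2 : p * ((2 * (n:ℝ) + 3) ^ d * (μ (DD i 0)).toReal) ≤
      2 * ε * ((2 * (n:ℝ) + 3) ^ d * d) + m * ((2 * (n:ℝ) + 5) ^ d - (2 * (n:ℝ) + 1) ^ d) +
        2 * ((2 * (n:ℝ) + 3) ^ d * d) * (ρ ^ m)⁻¹ := by
    exact (mul_le_mul_of_nonneg_left hlow hp.1.le).trans h1
  rw [← mul_le_mul_iff_right₀ hL]
  refine le_trans (le_of_eq (by ring)) (h2.trans (le_of_eq ?_))
  field_simp

lemma ratio_tendsto (d : ℕ) : Filter.Tendsto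
    (fun n : ℕ => (((2 * (n:ℝ) + 5) ^ d - (2 * (n:ℝ) + 1) ^ d) / (2 * (n:ℝ) + 3) ^ d))
    Filter.atTop (nhds 0) := by
  have h : ∀ c : ℝ, Filter.Tendsto (fun n : ℕ => ((2 * (n:ℝ) + c) / (2 * (n:ℝ) + 3))) Filter.atTop (nhds 1) := by
    intro c
    have h1 : Filter.Tendsto (fun n : ℕ => 2 * (n:ℝ) + 3) Filter.atTop Filter.atTop :=
      Filter.tendsto_atTop_add_const_right _ _ (tendsto_natCast_atTop_atTop.const_mul_atTop (by norm_num))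
    have h2 : Filter.Tendsto (fun n : ℕ => 1 + (c - 3) / (2 * (n:ℝ) + 3)) Filter.atTop (nhds (1 + 0)) :=
      (h1.const_div_atTop (c - 3)).const_add 1
    rw [add_zero] at h2
    refine h2.congr fun n => ?_
    have : 2 * (n:ℝ) + 3 ≠ 0 := by positivity
    field_simp
    ring
  have h3 := ((h 5).pow d).sub ((h 1).pow d)
  simp only [one_pow, sub_self] at h3
  refine h3.congr fun n => ?_
  rw [div_pow, div_pow, sub_div]

lemma DD_null {d : ℕ} {p : ℝ} (hp : p ∈ Set.Ioo (0 : ℝ) 1) {μ : Measure (Config d)}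
    (hμ : IsBernoulli d p μ) (i : Fin d) (x : Vertex d) : μ (DD i x) = 0 := by
  have := hμ.1
  rw [DD_shift hμ]
  have h1 : ∀ ε : ℝ, 0 < ε → ε < p → p * (μ (DD i 0)).toReal ≤ 2 * ε * d := by
    intro ε hε hεp
    obtain ⟨ρ, hρ, H⟩ := DD_bound hp hμ i hε hεp
    have h2 : ∀ m : ℕ, p * (μ (DD i 0)).toReal ≤ 2 * ε * d + m * 0 + 2 * d * (ρ ^ m)⁻¹ := by
      intro m
      refine ge_of_tendsto' (x := Filter.atTop) ?_ (fun n => H n m)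
      exact (((ratio_tendsto d).const_mul (m:ℝ)).const_add _).add_const _
    have h3 : Filter.Tendsto (fun m : ℕ => 2 * ε * d + m * 0 + 2 * d * (ρ ^ m)⁻¹) Filter.atTop
        (nhds (2 * ε * d + 2 * d * 0)) := by
      simp only [mul_zero (_ : ℝ), add_zero]
      have : Filter.Tendsto (fun m : ℕ => (ρ ^ m)⁻¹) Filter.atTop (nhds 0) :=
        (tendsto_pow_atTop_atTop_of_one_lt hρ).inv_tendsto_atTop
      simpa using (this.const_mul (2 * (d:ℝ))).const_add (2 * ε * d)
    simpa using ge_of_tendsto' h3 h2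
  have h4 : p * (μ (DD i 0)).toReal ≤ 0 := by
    have h5 : Filter.Tendsto (fun ε : ℝ => 2 * ε * d) (nhdsWithin 0 (Set.Ioi 0)) (nhds (2 * 0 * d)) := by
      apply Filter.Tendsto.mono_left _ nhdsWithin_le_nhds
      exact Continuous.tendsto (by fun_prop) 0
    have := ge_of_tendsto h5 (b := p * (μ (DD i 0)).toReal) (by
      filter_upwards [Ioo_mem_nhdsGT hp.1] with ε hε
      exact h1 ε hε.1 hε.2)
    simpa using this
  have h6 : (μ (DD i 0)).toReal = 0 := by
    have := hp.1
    have : (μ (DD i 0)).toReal ≤ 0 := by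
      by_contra hh
      push Not at hh
      nlinarith [mul_pos hp.1 hh]
    exact le_antisymm this ENNReal.toReal_nonneg
  exact ((ENNReal.toReal_eq_zero_iff _).1 h6).resolve_right (measure_ne_top _ _)

lemma twoArm_null {d : ℕ} {p : ℝ} (hp : p ∈ Set.Ioo (0 : ℝ) 1) {μ : Measure (Config d)}
    (hμ : IsBernoulli d p μ) : μ {ω | TwoArm ω} = 0 := by
  have : {ω : Config d | TwoArm ω} ⊆ ⋃ i : Fin d, ⋃ x : Vertex d, DD i x := by
    rintro ω ⟨u, v, ha, h1, h2, h3⟩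
    simp only [Set.mem_iUnion]
    obtain ⟨i, rfl | rfl⟩ := adj_cases ha
    · exact ⟨i, u, h1, h2, h3⟩
    · exact ⟨i, v, h2, h1, fun h => h3 h.symm⟩
  refine measure_mono_null this ?_
  simp only [measure_iUnion_null_iff]
  exact fun i x => DD_null hp hμ i x

lemma adj_connected {d : ℕ} (x y : Vertex d) : Relation.ReflTransGen adj x y := by
  suffices h : ∀ (n : ℕ) (x : Vertex d), ∑ i, (x i - y i).natAbs = n → Relation.ReflTransGen adj x y from
    h _ x rfl
  intro n
  induction n with
  | zero =>
    intro x h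
    have : x = y := by
      ext i
      have := (Finset.sum_eq_zero_iff.1 h) i (Finset.mem_univ i)
      omega
    rw [this]
  | succ n ih =>
    intro x h
    obtain ⟨i, _, hi⟩ := Finset.exists_ne_zero_of_sum_ne_zero (h.trans_ne (Nat.succ_ne_zero n))
    have h1 := Finset.add_sum_erase Finset.univ (fun i => (x i - y i).natAbs) (Finset.mem_univ i)
    have key : ∀ x' : Vertex d, (∀ j, j ≠ i → x' j = x j) → (x' i - y i).natAbs + 1 = (x i - y i).natAbs → 
        ∑ i, (x' i - y i).natAbs = n := by
      intro x' h2 h3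
      have h4 := Finset.add_sum_erase Finset.univ (fun i => (x' i - y i).natAbs) (Finset.mem_univ i)
      have h5 : ∑ j ∈ Finset.univ.erase i, (x' j - y j).natAbs = ∑ j ∈ Finset.univ.erase i, (x j - y j).natAbs :=
        Finset.sum_congr rfl fun j hj => by rw [h2 j (Finset.ne_of_mem_erase hj)]
      omega
    by_cases hlt : x i < y i
    · refine Relation.ReflTransGen.head (adj_uv x i) (ih _ (key _ ?_ ?_))
      · intro j hj; simp [uv, hj]
      · simp only [Pi.add_apply, uv, Pi.single_eq_same]; omega
    · have ha : adj x (x - uv i) := by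
        have := adj_symm (adj_uv (x - uv i) i)
        simpa using this
      refine Relation.ReflTransGen.head ha (ih _ (key _ ?_ ?_))
      · intro j hj; simp [uv, hj]
      · simp only [Pi.sub_apply, uv, Pi.single_eq_same]; omega

end Translation

/-- Burton–Keane: for every `d ≥ 1` and `p ∈ (0,1)` with `θ(p) > 0`, `ℙ_p`-almost surely
there exists exactly one infinite open cluster. -/
theorem uniqueness_of_infinite_cluster
    (d : ℕ) (hd : 1 ≤ d) (p : ℝ) (hp : p ∈ Set.Ioo (0 : ℝ) 1)
    (μ : Measure (Config d)) (hμ : IsBernoulli d p μ)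
    (hθ : 0 < μ (ZeroToInfinity d)) :
    μ {ω : Config d |
        ∃! C : Set (Vertex d), (∃ x, C = cluster ω x) ∧ C.Infinite} = 1 := by
  have hprob := hμ.1
  have h1 := existence hp hμ hθ
  have h2 : ∀ᵐ ω ∂μ, ∀ s : Finset (Edge d), ¬ TwoArm (ovr s (fun _ => true) ω) := by
    rw [ae_all_iff]
    intro s
    have h3 := finite_energy hp hμ s (fun _ => true) (twoArm_null hp hμ)
    rw [ae_iff]
    simpa using h3
  rw [← measure_univ (μ := μ)]
  refine measure_congr (Filter.eventuallyEq_univ.2 ?_)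
  filter_upwards [h1, h2] with ω hx hω
  obtain ⟨x, hx⟩ := hx
  refine ⟨cluster ω x, ⟨⟨x, rfl⟩, hx⟩, ?_⟩
  rintro _ ⟨⟨y, rfl⟩, hy⟩
  exact cluster_eq (merge (adj_connected y x) ω hω hy hx)
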